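/- arXiv:2407.11413 — 3 statements merged into one kernel-verified Lean document; each statement's English description precedes it below -/
import Mathlib

section
/- Fix T > 0 and t₀ ∈ ℝ and define μ(t) = 1/(T + t₀ − t) for t ∈ [t₀, t₀ + T). Let α̃ : [1/T, ∞) → [0,∞) be continuous and let σ_s : [1/T, ∞) → (0,∞) be differentiable with σ_s'(s) ≤ s⁻²·σ_s(s)·α̃(s)/2 for all s ≥ 1/T. Let V : [t₀, t₀ + T) → [0,∞) be differentiable and g : [t₀, t₀ + T) → [0,∞) be such that V'(t) ≤ −α̃(μ(t))·V(t) + g(t) for all t ∈ [t₀, t₀ + T). Then the changed Lyapunov function W(t) = σ_s(μ(t))·V(t) is differentiable and satisfies W'(t) ≤ −(α̃(μ(t))/2)·W(t) + σ_s(μ(t))·g(t) for all t ∈ [t₀, t₀ + T). -/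
open Set

/-!
Along a gain with `μ̇ = μ²`, the weight `σ ∘ μ` has derivative `σ'(μ) μ²`, and this factor `μ²`
cancels the `μ⁻²` of the growth condition. The weight therefore grows at rate at most `α(μ) / 2`,
which by the product rule costs half of the decay rate `α(μ)` of `V`.
-/

lemma hasDerivAt_one_div_const_sub {𝕜 : Type*} [NontriviallyNormedField 𝕜] {c t : 𝕜}
    (hct : c - t ≠ 0) : HasDerivAt (fun x => 1 / (c - x)) ((1 / (c - t)) ^ 2) t := by
  simpa only [one_div, neg_neg, inv_pow] using
    ((hasDerivAt_id' t).const_sub c).fun_inv hct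

lemma mapsTo_one_div_const_sub_Ico {𝕜 : Type*} [Field 𝕜] [LinearOrder 𝕜] [IsStrictOrderedRing 𝕜]
    (T t₀ : 𝕜) : MapsTo (fun t => 1 / (T + t₀ - t)) (Ico t₀ (t₀ + T)) (Ici (1 / T)) := by
  rintro t ⟨ht₀, htT⟩
  exact one_div_le_one_div_of_le (by linarith) (by linarith)

lemma mul_sq_le_half_mul_of_le_inv_sq_mul {𝕜 : Type*} [Field 𝕜] [LinearOrder 𝕜]
    [IsStrictOrderedRing 𝕜] {s σ σ' a : 𝕜} (hs : s ≠ 0) (hσ' : σ' ≤ s⁻¹ ^ 2 * σ * a / 2) :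
    σ' * s ^ 2 ≤ a / 2 * σ :=
  calc
    σ' * s ^ 2 ≤ s⁻¹ ^ 2 * σ * a / 2 * s ^ 2 := by gcongr
    _ = a / 2 * σ := by field_simp

lemma mul_add_mul_le_of_growth_of_decay {R : Type*} [CommRing R] [PartialOrder R]
    [IsOrderedRing R] {a b ρ ρ' v v' w : R} (hρ : 0 ≤ ρ) (hv : 0 ≤ v)
    (hρ' : ρ' ≤ b * ρ) (hv' : v' ≤ -a * v + w) :
    ρ' * v + ρ * v' ≤ -(a - b) * (ρ * v) + ρ * w :=
  calc
    ρ' * v + ρ * v' ≤ b * ρ * v + ρ * (-a * v + w) := by gcongr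
    _ = -(a - b) * (ρ * v) + ρ * w := by ring

theorem changing_lyapunov_function_general {I S : Set ℝ} {μ α σ σ' V V' g : ℝ → ℝ}
    (hS : 0 ∉ S) (hμS : MapsTo μ I S) (hμ : ∀ t ∈ I, HasDerivAt μ (μ t ^ 2) t)
    (hσ_nonneg : ∀ s ∈ S, 0 ≤ σ s) (hσ : ∀ s ∈ S, HasDerivAt σ (σ' s) s)
    (hσ' : ∀ s ∈ S, σ' s ≤ s⁻¹ ^ 2 * σ s * α s / 2)
    (hV_nonneg : ∀ t ∈ I, 0 ≤ V t) (hV : ∀ t ∈ I, HasDerivAt V (V' t) t)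
    (hV' : ∀ t ∈ I, V' t ≤ -α (μ t) * V t + g t) :
    ∀ t ∈ I, ∃ W' : ℝ,
      HasDerivAt (fun t => σ (μ t) * V t) W' t ∧
      W' ≤ -(α (μ t) / 2) * (σ (μ t) * V t) + σ (μ t) * g t := by
  intro t ht
  have hμt : μ t ∈ S := hμS ht
  have weight_deriv : HasDerivAt (fun t => σ (μ t)) (σ' (μ t) * μ t ^ 2) t :=
    (hσ _ hμt).comp t (hμ t ht)
  have weight_growth : σ' (μ t) * μ t ^ 2 ≤ α (μ t) / 2 * σ (μ t) :=
    mul_sq_le_half_mul_of_le_inv_sq_mul (ne_of_mem_of_not_mem hμt hS) (hσ' _ hμt)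
  refine ⟨_, weight_deriv.fun_mul (hV t ht), ?_⟩
  simpa only [sub_half] using
    mul_add_mul_le_of_growth_of_decay (hσ_nonneg _ hμt) (hV_nonneg t ht) weight_growth (hV' t ht)

/-- **Changing-Lyapunov-function step** in the proof of Theorem 1: if
`V'(t) ≤ -α̃(μ(t))·V(t) + g(t)` and `σ_s'(s) ≤ s⁻²·σ_s(s)·α̃(s)/2`, then
`W(t) = σ_s(μ(t))·V(t)` is differentiable with
`W'(t) ≤ -(α̃(μ(t))/2)·W(t) + σ_s(μ(t))·g(t)`. -/
theorem changing_lyapunov_function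
    (T t₀ : ℝ) (hT : 0 < T)
    (μ : ℝ → ℝ) (hμ : ∀ t, μ t = 1 / (T + t₀ - t))
    (tα : ℝ → ℝ)
    (htαcont : ContinuousOn tα (Ici (1 / T)))
    (htαnonneg : ∀ s, 1 / T ≤ s → 0 ≤ tα s)
    (σs σs' : ℝ → ℝ)
    (hσspos : ∀ s, 1 / T ≤ s → 0 < σs s)
    (hσsderiv : ∀ s, 1 / T ≤ s → HasDerivAt σs (σs' s) s)
    (hσs' : ∀ s, 1 / T ≤ s → σs' s ≤ s⁻¹ ^ 2 * σs s * tα s / 2)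
    (V V' g : ℝ → ℝ)
    (hVnonneg : ∀ t ∈ Ico t₀ (t₀ + T), 0 ≤ V t)
    (hVderiv : ∀ t ∈ Ico t₀ (t₀ + T), HasDerivAt V (V' t) t)
    (hgnonneg : ∀ t ∈ Ico t₀ (t₀ + T), 0 ≤ g t)
    (hVineq : ∀ t ∈ Ico t₀ (t₀ + T), V' t ≤ -tα (μ t) * V t + g t) :
    ∀ t ∈ Ico t₀ (t₀ + T), ∃ W' : ℝ,
      HasDerivAt (fun t => σs (μ t) * V t) W' t ∧
      W' ≤ -(tα (μ t) / 2) * (σs (μ t) * V t) + σs (μ t) * g t := by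
  obtain rfl : μ = fun t => 1 / (T + t₀ - t) := funext hμ
  exact changing_lyapunov_function_general (not_le.2 (one_div_pos.2 hT))
    (mapsTo_one_div_const_sub_Ico T t₀)
    (fun t ht => hasDerivAt_one_div_const_sub (by linarith [ht.2]))
    (fun s hs => (hσspos s hs).le) hσsderiv hσs' hVnonneg hVderiv hVineq
end

section
/- Fix T > 0, t₀ ∈ ℝ and define μ(t) = 1/(T + t₀ − t) for t ∈ [t₀, t₀ + T). Let v₁ > 0, v₂ > 0, 0 ≤ v₃ ≤ v₂, B ≥ 0, and let α_x : (0,∞) → (0,∞) be differentiable, nondecreasing, with α_x'(s) ≤ (v₁/(2v₂))·s⁻²·α_x(s)² for all s > 0; define δ_x(s) = α_x'(s)·s²/α_x(s). Let V : [t₀, t₀ + T) → [0,∞) be differentiable with V'(t) ≤ (−v₁·α_x(μ(t)) + v₃·δ_x(μ(t)) + 2)·V(t) + B·exp(−v₁·∫_{t₀}^{t} α_x(μ(s)) ds) for all t ∈ [t₀, t₀ + T). Then for every t ∈ [t₀, t₀ + T): V(t) ≤ (V(t₀) + B·T)·exp(2T)·exp(−(v₁/2)·∫_{t₀}^{t}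 α_x(μ(s)) ds). -/
open Set

/-!
By the bound on `αx'`, the term `v₃ * δx (μ t)` is at most half of the decay rate
`v₁ * αx (μ t)`, so that `V' ≤ P' * V + B * exp P` with
`P t = κ * (t - t₀) - v₁ / 2 * ∫ s in t₀..t, αx (μ s)` and `κ = 2`: the given perturbation
decays at the full rate and is therefore dominated by `B * exp P`. Consequently `V * exp (-P)`
grows at speed at most `B`.
-/

theorem le_mul_exp_of_deriv_right_le {f f' P p : ℝ → ℝ} {a b C : ℝ}
    (hf : ContinuousOn f (Icc a b))
    (hf' : ∀ t ∈ Ico a b, HasDerivWithinAt f (f' t) (Ici t) t)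
    (hP : ContinuousOn P (Icc a b))
    (hP' : ∀ t ∈ Ico a b, HasDerivWithinAt P (p t) (Ici t) t)
    (bound : ∀ t ∈ Ico a b, f' t ≤ p t * f t + C * Real.exp (P t)) :
    ∀ t ∈ Icc a b, f t ≤ (f a * Real.exp (-P a) + C * (t - a)) * Real.exp (P t) := by
  intro t ht
  suffices f t * Real.exp (-P t) ≤ f a * Real.exp (-P a) + C * (t - a) by
    rwa [Real.exp_neg, ← div_eq_mul_inv, div_le_iff₀ (Real.exp_pos _)] at this
  refine image_le_of_deriv_right_le_deriv_boundary (f := fun s ↦ f s * Real.exp (-P s))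
    (B := fun s ↦ f a * Real.exp (-P a) + C * (s - a)) (B' := fun _ ↦ C)
    (hf.mul hP.neg.rexp) (fun s hs ↦ (hf' s hs).mul (hP' s hs).neg.exp)
    (by simp) (by fun_prop) (fun s _ ↦ ?_) (fun s hs ↦ ?_) ht
  · simpa using
      ((((hasDerivAt_id s).sub_const a).const_mul C).const_add
        (f a * Real.exp (-P a))).hasDerivWithinAt (s := Ici s)
  · calc f' s * Real.exp (-P s) + f s * (Real.exp (-P s) * -p s)
        = (f' s - p s * f s) * Real.exp (-P s) := by ring
      _ ≤ C * Real.exp (P s) * Real.exp (-P s) := by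
          gcongr
          linarith [bound s hs]
      _ = C := by rw [mul_assoc, ← Real.exp_add, add_neg_cancel, Real.exp_zero, mul_one]

theorem hasDerivWithinAt_Ici_integral_of_continuousOn {E : Type*} [NormedAddCommGroup E]
    [NormedSpace ℝ E] [CompleteSpace E] {f : ℝ → E} {a b t : ℝ}
    (hf : ContinuousOn f (Icc a b)) (ht : t ∈ Ico a b) :
    HasDerivWithinAt (fun u ↦ ∫ s in a..u, f s) (f t) (Ici t) t := by
  have hcont : ContinuousOn f (Icc t b) := hf.mono (Icc_subset_Icc_left ht.1)
  refine intervalIntegral.integral_hasDerivWithinAt_right (t := Ioi t) ?_ ?_ ?_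
  · exact (hf.mono (Icc_subset_Icc_right ht.2.le)).intervalIntegrable_of_Icc ht.1
  · exact ⟨Ioc t b, Ioc_mem_nhdsGT ht.2,
      (hcont.mono Ioc_subset_Icc_self).aestronglyMeasurable measurableSet_Ioc⟩
  · exact (hcont t (left_mem_Icc.2 ht.2.le)).mono_of_mem_nhdsWithin
      (Filter.mem_of_superset (Ioc_mem_nhdsGT ht.2) Ioc_subset_Icc_self)

theorem le_mul_exp_neg_integral_of_deriv_right_le {f f' r : ℝ → ℝ} {a b c d κ B : ℝ}
    (hf : ContinuousOn f (Icc a b))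
    (hf' : ∀ t ∈ Ico a b, HasDerivWithinAt f (f' t) (Ici t) t)
    (hr : ContinuousOn r (Icc a b)) (hr0 : ∀ t ∈ Ico a b, 0 ≤ r t)
    (hcd : c ≤ d) (hκ : 0 ≤ κ) (hB : 0 ≤ B)
    (bound : ∀ t ∈ Ico a b,
      f' t ≤ (-c * r t + κ) * f t + B * Real.exp (-d * ∫ s in a..t, r s)) :
    ∀ t ∈ Icc a b, f t ≤ (f a + B * (t - a)) * Real.exp (κ * (t - a)) *
      Real.exp (-c * ∫ s in a..t, r s) := by
  intro t ht
  set R : ℝ → ℝ := fun t ↦ ∫ s in a..t, r s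
  have hR : ContinuousOn R (Icc a b) := by
    have hab : a ≤ b := ht.1.trans ht.2
    rw [← uIcc_of_le hab] at hr ⊢
    exact intervalIntegral.continuousOn_primitive_interval hr.integrableOn_uIcc
  have hR0 : ∀ s ∈ Ico a b, 0 ≤ R s := fun s hs ↦
    intervalIntegral.integral_nonneg hs.1 fun u hu ↦ hr0 u ⟨hu.1, hu.2.trans_lt hs.2⟩
  have hP' : ∀ s ∈ Ico a b, HasDerivWithinAt (fun u ↦ -c * R u + κ * (u - a))
      (-c * r s + κ) (Ici s) s := fun s hs ↦ by
    simpa using ((hasDerivWithinAt_Ici_integral_of_continuousOn hr hs).const_mul (-c)).fun_add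
      (((hasDerivWithinAt_id s (Ici s)).sub_const a).const_mul κ)
  have hforcing : ∀ s ∈ Ico a b,
      B * Real.exp (-d * R s) ≤ B * Real.exp (-c * R s + κ * (s - a)) := fun s hs ↦ by
    gcongr
    have := mul_le_mul_of_nonneg_right hcd (hR0 s hs)
    have := mul_nonneg hκ (sub_nonneg.2 hs.1)
    linarith
  have h := le_mul_exp_of_deriv_right_le hf hf' (by fun_prop) hP'
    (fun s hs ↦ (bound s hs).trans (add_le_add_right (hforcing s hs) _)) t ht
  simpa [R, Real.exp_add, mul_assoc, mul_comm, mul_left_comm] using h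

theorem mul_mul_sq_div_le_half_mul {v₁ v₂ v₃ s x x' : ℝ} (hv₁ : 0 ≤ v₁) (hv₂ : 0 < v₂)
    (hv₃0 : 0 ≤ v₃) (hv₃ : v₃ ≤ v₂) (hs : s ≠ 0) (hx : 0 < x)
    (hx' : x' ≤ v₁ / (2 * v₂) * s⁻¹ ^ 2 * x ^ 2) :
    v₃ * (x' * s ^ 2 / x) ≤ v₁ / 2 * x :=
  calc v₃ * (x' * s ^ 2 / x)
      ≤ v₃ * ((v₁ / (2 * v₂) * s⁻¹ ^ 2 * x ^ 2) * s ^ 2 / x) := by gcongr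
    _ = v₃ * (v₁ / (2 * v₂) * x) := by field_simp
    _ ≤ v₂ * (v₁ / (2 * v₂) * x) := by gcongr
    _ = v₁ / 2 * x := by field_simp

theorem chain_integrator_comparison_estimate_general
    {T t₀ v₁ v₂ v₃ κ B : ℝ} {μ αx αx' δx V V' : ℝ → ℝ}
    (hμ : ContinuousOn μ (Ico t₀ (t₀ + T))) (hμpos : ∀ t ∈ Ico t₀ (t₀ + T), 0 < μ t)
    (hv₁ : 0 ≤ v₁) (hv₂ : 0 < v₂) (hv₃0 : 0 ≤ v₃) (hv₃ : v₃ ≤ v₂) (hκ : 0 ≤ κ) (hB : 0 ≤ B)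
    (hαxpos : ∀ s, 0 < s → 0 < αx s)
    (hαxderiv : ∀ s, 0 < s → HasDerivAt αx (αx' s) s)
    (hαx' : ∀ s, 0 < s → αx' s ≤ v₁ / (2 * v₂) * s⁻¹ ^ 2 * αx s ^ 2)
    (hδx : ∀ s, δx s = αx' s * s ^ 2 / αx s)
    (hVnonneg : ∀ t ∈ Ico t₀ (t₀ + T), 0 ≤ V t)
    (hV : ContinuousOn V (Ico t₀ (t₀ + T)))
    (hVderiv : ∀ t ∈ Ico t₀ (t₀ + T), HasDerivWithinAt V (V' t) (Ici t) t)
    (hVineq : ∀ t ∈ Ico t₀ (t₀ + T),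
      V' t ≤ (-v₁ * αx (μ t) + v₃ * δx (μ t) + κ) * V t +
        B * Real.exp (-v₁ * ∫ s in t₀..t, αx (μ s))) :
    ∀ t ∈ Ico t₀ (t₀ + T),
      V t ≤ (V t₀ + B * T) * Real.exp (κ * T) *
        Real.exp (-(v₁ / 2) * ∫ s in t₀..t, αx (μ s)) := by
  intro t ht
  have hsub : Icc t₀ t ⊆ Ico t₀ (t₀ + T) := fun s hs ↦ ⟨hs.1, hs.2.trans_lt ht.2⟩
  have hsub' : Ico t₀ t ⊆ Ico t₀ (t₀ + T) := Ico_subset_Ico_right ht.2.le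
  have hrate : ContinuousOn (fun s ↦ αx (μ s)) (Ico t₀ (t₀ + T)) := fun s hs ↦
    (hαxderiv _ (hμpos s hs)).continuousAt.comp_continuousWithinAt (hμ s hs)
  have hVineq' : ∀ s ∈ Ico t₀ (t₀ + T), V' s ≤ (-(v₁ / 2) * αx (μ s) + κ) * V s +
      B * Real.exp (-v₁ * ∫ u in t₀..s, αx (μ u)) := fun s hs ↦ by
    have hm := hμpos s hs
    have hδ : v₃ * δx (μ s) ≤ v₁ / 2 * αx (μ s) :=
      hδx (μ s) ▸ mul_mul_sq_div_le_half_mul hv₁ hv₂ hv₃0 hv₃ hm.ne' (hαxpos _ hm) (hαx' _ hm)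
    linarith [hVineq s hs, mul_le_mul_of_nonneg_right hδ (hVnonneg s hs)]
  have hV₀ : 0 ≤ V t₀ := hVnonneg t₀ ⟨le_rfl, ht.1.trans_lt ht.2⟩
  have htT : t - t₀ ≤ T := by linarith [ht.2]
  have hT : 0 ≤ T := (sub_nonneg.2 ht.1).trans htT
  calc V t ≤ (V t₀ + B * (t - t₀)) * Real.exp (κ * (t - t₀)) *
        Real.exp (-(v₁ / 2) * ∫ s in t₀..t, αx (μ s)) :=
      le_mul_exp_neg_integral_of_deriv_right_le (hV.mono hsub)
        (fun s hs ↦ hVderiv s (hsub' hs)) (hrate.mono hsub)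
        (fun s hs ↦ (hαxpos _ (hμpos s (hsub' hs))).le) (half_le_self hv₁) hκ hB
        (fun s hs ↦ hVineq' s (hsub' hs)) t (right_mem_Icc.2 ht.1)
    _ ≤ _ := by gcongr

/-- **Central comparison estimate** in the proof of Lemma 1 (robust DPTCO for
chain-integrator systems): if
`V'(t) ≤ (-v₁·α_x(μ(t)) + v₃·δ_x(μ(t)) + 2)·V(t) + B·exp(-v₁·∫_{t₀}^t α_x(μ))`
with `δ_x(s) = α_x'(s)·s²/α_x(s)`, `0 ≤ v₃ ≤ v₂` and
`α_x'(s) ≤ (v₁/(2v₂))·s⁻²·α_x(s)²`, then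
`V(t) ≤ (V(t₀) + B·T)·exp(2T)·exp(-(v₁/2)·∫_{t₀}^t α_x(μ))`. -/
theorem chain_integrator_comparison_estimate
    (T t₀ : ℝ) (hT : 0 < T)
    (μ : ℝ → ℝ) (hμ : ∀ t, μ t = 1 / (T + t₀ - t))
    (v₁ v₂ v₃ B : ℝ) (hv₁ : 0 < v₁) (hv₂ : 0 < v₂)
    (hv₃0 : 0 ≤ v₃) (hv₃ : v₃ ≤ v₂) (hB : 0 ≤ B)
    (αx αx' : ℝ → ℝ)
    (hαxpos : ∀ s, 0 < s → 0 < αx s)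
    (hαxderiv : ∀ s, 0 < s → HasDerivAt αx (αx' s) s)
    (hαxmono : MonotoneOn αx (Ioi (0 : ℝ)))
    (hαx' : ∀ s, 0 < s → αx' s ≤ v₁ / (2 * v₂) * s⁻¹ ^ 2 * αx s ^ 2)
    (δx : ℝ → ℝ) (hδx : ∀ s, δx s = αx' s * s ^ 2 / αx s)
    (V V' : ℝ → ℝ)
    (hVnonneg : ∀ t ∈ Ico t₀ (t₀ + T), 0 ≤ V t)
    (hVderiv : ∀ t ∈ Ico t₀ (t₀ + T), HasDerivAt V (V' t) t)
    (hVineq : ∀ t ∈ Ico t₀ (t₀ + T),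
      V' t ≤ (-v₁ * αx (μ t) + v₃ * δx (μ t) + 2) * V t +
        B * Real.exp (-v₁ * ∫ s in t₀..t, αx (μ s))) :
    ∀ t ∈ Ico t₀ (t₀ + T),
      V t ≤ (V t₀ + B * T) * Real.exp (2 * T) *
        Real.exp (-(v₁ / 2) * ∫ s in t₀..t, αx (μ s)) := by
  have hgap : ∀ t ∈ Ico t₀ (t₀ + T), 0 < T + t₀ - t := fun t ht ↦ by linarith [ht.2]
  obtain rfl : μ = fun t ↦ 1 / (T + t₀ - t) := funext hμ
  exact chain_integrator_comparison_estimate_general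
    (continuousOn_const.div (by fun_prop) fun t ht ↦ (hgap t ht).ne')
    (fun t ht ↦ one_div_pos.2 (hgap t ht)) hv₁.le hv₂ hv₃0 hv₃ zero_le_two hB hαxpos hαxderiv
    hαx' hδx hVnonneg (HasDerivAt.continuousOn hVderiv)
    (fun t ht ↦ (hVderiv t ht).hasDerivWithinAt) hVineq
end

section
/- Fix T > 0, t₀ ∈ ℝ and define μ(t) = 1/(T + t₀ − t) for t ∈ [t₀, t₀ + T). Let α̃ : [1/T, ∞) → [0,∞) be continuous and let σ_s : [1/T, ∞) → (0,∞) be differentiable with σ_s'(s) ≤ s⁻²·σ_s(s)·α̃(s)/2 for all s ≥ 1/T. Let M ≥ 0 and let V : [t₀, t₀ + T) → [0,∞) be differentiable and g : [t₀, t₀ + T) → [0,∞) continuous with V'(t) ≤ −α̃(μ(t))·V(t) + g(t) and σ_s(μ(t))·g(t) ≤ (M/2)·α̃(μ(t)) for all t ∈ [t₀, t₀ + T). Then for every t ∈ [t₀, t₀ + T): V(t) ≤ (σ_s(μ(t₀))·V(t₀) + M) / σ_s(μ(t)). In particular, if σ_s(s) → ∞ as s → ∞, then V(t) → 0 as t →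 t₀ + T. -/
open Set Filter

/-!
The gain `μ` satisfies `μ' = μ²`, so the growth condition on `σ_s` is exactly what
makes `ρ = σ_s ∘ μ` grow at rate at most `α̃(μ)/2`. This uses up only half of the decay rate of `V`,
and the rescaled function `W = ρ V` obeys `W' ≤ -(α̃(μ)/2) (W - M)`. Hence `W` cannot increase while
it exceeds `M`, so it never exceeds `max (W t₀) M ≤ W t₀ + M`.
-/

open scoped Topology

theorem le_of_deriv_right_nonpos_of_lt {f f' : ℝ → ℝ} {a b C : ℝ}
    (hf : ContinuousOn f (Icc a b))
    (hf' : ∀ x ∈ Ico a b, HasDerivWithinAt f (f' x) (Ici x) x)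
    (ha : f a ≤ C) (hC : ∀ x ∈ Ico a b, C < f x → f' x ≤ 0) :
    ∀ x ∈ Icc a b, f x ≤ C := by
  intro x hx
  -- The barrier `C + ε (1 + y - a)` is strictly above `C` and has positive slope.
  have le_barrier : ∀ ε > 0, f x ≤ C + ε * (1 + x - a) := fun ε hε ↦ by
    refine image_le_of_deriv_right_lt_deriv_boundary (B := fun y ↦ C + ε * (1 + y - a))
      (B' := fun _ ↦ ε) hf hf' (by linarith) (fun y ↦ ?_) (fun y hy hfy ↦ ?_) hx
    · simpa using ((((hasDerivAt_id y).const_add 1).sub_const a).const_mul ε).const_add C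
    · have : 0 < ε * (1 + y - a) := mul_pos hε (by linarith [hy.1])
      exact (hC y hy (by linarith)).trans_lt hε
  have tendsto_barrier : Tendsto (fun ε ↦ C + ε * (1 + x - a)) (𝓝[>] 0) (𝓝 C) := by
    have : Continuous fun ε ↦ C + ε * (1 + x - a) := by fun_prop
    simpa using this.continuousWithinAt (s := Ioi 0) (x := 0) |>.tendsto
  exact ge_of_tendsto tendsto_barrier (eventually_mem_nhdsWithin.mono le_barrier)

theorem deriv_mul_nonpos_of_le_mul {ρ ρ' v v' a b g M : ℝ} (hρ : 0 ≤ ρ) (hv : 0 ≤ v) (hba : b ≤ a)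
    (hρ' : ρ' ≤ b * ρ) (hv' : v' ≤ -a * v + g) (hg : ρ * g ≤ M * (a - b)) (hM : M ≤ ρ * v) :
    ρ' * v + ρ * v' ≤ 0 :=
  calc
    ρ' * v + ρ * v' ≤ b * ρ * v + ρ * (-a * v + g) := by gcongr
    _ = ρ * g - ρ * v * (a - b) := by ring
    _ ≤ M * (a - b) - ρ * v * (a - b) := by gcongr
    _ = -((a - b) * (ρ * v - M)) := by ring
    _ ≤ 0 := neg_nonpos.2 (mul_nonneg (sub_nonneg.2 hba) (sub_nonneg.2 hM))

theorem mul_le_max_of_deriv_le {ρ ρ' V V' a b g : ℝ → ℝ} {t₀ τ M : ℝ}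
    (hρ : ∀ t ∈ Ico t₀ τ, HasDerivWithinAt ρ (ρ' t) (Ico t₀ τ) t)
    (hV : ∀ t ∈ Ico t₀ τ, HasDerivWithinAt V (V' t) (Ico t₀ τ) t)
    (hρ_nonneg : ∀ t ∈ Ico t₀ τ, 0 ≤ ρ t) (hV_nonneg : ∀ t ∈ Ico t₀ τ, 0 ≤ V t)
    (hba : ∀ t ∈ Ico t₀ τ, b t ≤ a t) (hρ' : ∀ t ∈ Ico t₀ τ, ρ' t ≤ b t * ρ t)
    (hV' : ∀ t ∈ Ico t₀ τ, V' t ≤ -a t * V t + g t)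
    (hg : ∀ t ∈ Ico t₀ τ, ρ t * g t ≤ M * (a t - b t)) :
    ∀ t ∈ Ico t₀ τ, ρ t * V t ≤ max (ρ t₀ * V t₀) M := by
  intro t ht
  have hW : ∀ x ∈ Ico t₀ τ, HasDerivWithinAt (fun x ↦ ρ x * V x)
      (ρ' x * V x + ρ x * V' x) (Ico t₀ τ) x := fun x hx ↦ (hρ x hx).mul (hV x hx)
  have hsub : Icc t₀ t ⊆ Ico t₀ τ := Icc_subset_Ico_right ht.2
  have hsub' : Ico t₀ t ⊆ Ico t₀ τ := Ico_subset_Icc_self.trans hsub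
  refine le_of_deriv_right_nonpos_of_lt
    (fun x hx ↦ (hW x (hsub hx)).continuousWithinAt.mono hsub)
    (fun x hx ↦ (hW x (hsub' hx)).mono_of_mem_nhdsWithin ?_) (le_max_left _ _)
    (fun x hx hlt ↦ ?_) t (right_mem_Icc.2 ht.1)
  · exact mem_of_superset (Ico_mem_nhdsGE (hsub' hx).2) (Ico_subset_Ico_left hx.1)
  · have hx' := hsub' hx
    exact deriv_mul_nonpos_of_le_mul (hρ_nonneg x hx') (hV_nonneg x hx') (hba x hx') (hρ' x hx')
      (hV' x hx') (hg x hx') ((le_max_right _ _).trans hlt.le)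

/-- The time-varying gain `μ(t) = 1 / (τ - t)` of prescribed-time control with terminal time `τ`.
It is meaningful for `t < τ` only. -/
noncomputable def prescribedTimeGain (τ t : ℝ) : ℝ := (τ - t)⁻¹

namespace prescribedTimeGain

variable {t₀ t τ : ℝ}

theorem pos (ht : t < τ) : 0 < prescribedTimeGain τ t :=
  inv_pos.2 (sub_pos.2 ht)

theorem monotoneOn (τ : ℝ) : MonotoneOn (prescribedTimeGain τ) (Iio τ) :=
  fun _ _ _ ht hst ↦ inv_anti₀ (sub_pos.2 ht) (sub_le_sub_left hst τ)

theorem mapsTo_Ico (t₀ τ : ℝ) :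
    MapsTo (prescribedTimeGain τ) (Ico t₀ τ) (Ici (prescribedTimeGain τ t₀)) :=
  fun _ ht ↦ monotoneOn τ (ht.1.trans_lt ht.2) ht.2 ht.1

theorem hasDerivAt (ht : t ≠ τ) :
    HasDerivAt (prescribedTimeGain τ) (prescribedTimeGain τ t ^ 2) t := by
  have hinv := ((hasDerivAt_id t).const_sub τ).fun_inv (sub_ne_zero.2 ht.symm)
  exact hinv.congr_deriv (by simp [prescribedTimeGain])

theorem tendsto_atTop (τ : ℝ) : Tendsto (prescribedTimeGain τ) (𝓝[<] τ) atTop := by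
  have tendsto_sub : Tendsto (fun t ↦ τ - t) (𝓝[<] τ) (𝓝[>] 0) := by
    refine tendsto_nhdsWithin_iff.2 ⟨?_,
      eventually_mem_nhdsWithin.mono fun _ ht ↦ mem_Ioi.2 (sub_pos.2 ht)⟩
    simpa using (continuous_sub_left τ).continuousWithinAt (s := Iio τ) (x := τ) |>.tendsto
  exact tendsto_inv_nhdsGT_zero.comp tendsto_sub

theorem hasDerivWithinAt_comp {σ : ℝ → ℝ} {σ' : ℝ} (ht : t ∈ Ico t₀ τ)
    (hσ : HasDerivWithinAt σ σ' (Ici (prescribedTimeGain τ t₀)) (prescribedTimeGain τ t)) :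
    HasDerivWithinAt (σ ∘ prescribedTimeGain τ) (σ' * prescribedTimeGain τ t ^ 2) (Ico t₀ τ) t :=
  hσ.comp t (hasDerivAt ht.2.ne).hasDerivWithinAt (mapsTo_Ico t₀ τ)

end prescribedTimeGain

theorem mul_le_max_of_prescribedTimeGain {t₀ τ M : ℝ} {α σ σ' V V' g : ℝ → ℝ}
    (hα : ∀ s, prescribedTimeGain τ t₀ ≤ s → 0 ≤ α s)
    (hσ_nonneg : ∀ s, prescribedTimeGain τ t₀ ≤ s → 0 ≤ σ s)
    (hσ : ∀ s, prescribedTimeGain τ t₀ ≤ s →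
      HasDerivWithinAt σ (σ' s) (Ici (prescribedTimeGain τ t₀)) s)
    (hσ' : ∀ s, prescribedTimeGain τ t₀ ≤ s → σ' s ≤ s⁻¹ ^ 2 * σ s * α s / 2)
    (hV_nonneg : ∀ t ∈ Ico t₀ τ, 0 ≤ V t)
    (hV : ∀ t ∈ Ico t₀ τ, HasDerivWithinAt V (V' t) (Ico t₀ τ) t)
    (hV' : ∀ t ∈ Ico t₀ τ, V' t ≤ -α (prescribedTimeGain τ t) * V t + g t)
    (hg : ∀ t ∈ Ico t₀ τ,
      σ (prescribedTimeGain τ t) * g t ≤ M / 2 * α (prescribedTimeGain τ t)) :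
    ∀ t ∈ Ico t₀ τ, σ (prescribedTimeGain τ t) * V t ≤
      max (σ (prescribedTimeGain τ t₀) * V t₀) M := by
  have hmem := prescribedTimeGain.mapsTo_Ico t₀ τ
  refine mul_le_max_of_deriv_le (ρ := σ ∘ prescribedTimeGain τ)
    (a := fun t ↦ α (prescribedTimeGain τ t)) (b := fun t ↦ α (prescribedTimeGain τ t) / 2)
    (fun t ht ↦ prescribedTimeGain.hasDerivWithinAt_comp ht (hσ _ (hmem ht))) hV
    (fun t ht ↦ hσ_nonneg _ (hmem ht)) hV_nonneg (fun t ht ↦ half_le_self (hα _ (hmem ht)))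
    (fun t ht ↦ ?_) hV' (fun t ht ↦ (hg t ht).trans_eq (by ring))
  set m := prescribedTimeGain τ t
  have hm : 0 < m := prescribedTimeGain.pos ht.2
  calc
    σ' m * m ^ 2 ≤ m⁻¹ ^ 2 * σ m * α m / 2 * m ^ 2 := by gcongr; exact hσ' m (hmem ht)
    _ = α m / 2 * σ m := by field_simp

theorem changed_lyapunov_boundedness_and_convergence_general
    (T t₀ : ℝ) (hT : 0 < T)
    (μ : ℝ → ℝ) (hμ : ∀ t, μ t = 1 / (T + t₀ - t))
    (tα : ℝ → ℝ)
    (htαnonneg : ∀ s, 1 / T ≤ s → 0 ≤ tα s)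
    (σs σs' : ℝ → ℝ)
    (hσspos : ∀ s, 1 / T ≤ s → 0 < σs s)
    (hσsderiv : ∀ s, 1 / T ≤ s → HasDerivWithinAt σs (σs' s) (Ici (1 / T)) s)
    (hσs' : ∀ s, 1 / T ≤ s → σs' s ≤ s⁻¹ ^ 2 * σs s * tα s / 2)
    (M : ℝ) (hM : 0 ≤ M)
    (V V' g : ℝ → ℝ)
    (hVnonneg : ∀ t ∈ Ico t₀ (t₀ + T), 0 ≤ V t)
    (hVderiv : ∀ t ∈ Ico t₀ (t₀ + T), HasDerivWithinAt V (V' t) (Ico t₀ (t₀ + T)) t)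
    (hVineq : ∀ t ∈ Ico t₀ (t₀ + T), V' t ≤ -tα (μ t) * V t + g t)
    (hdom : ∀ t ∈ Ico t₀ (t₀ + T), σs (μ t) * g t ≤ M / 2 * tα (μ t)) :
    (∀ t ∈ Ico t₀ (t₀ + T), V t ≤ (σs (μ t₀) * V t₀ + M) / σs (μ t)) ∧
    (Tendsto σs atTop atTop →
      Tendsto V (nhdsWithin (t₀ + T) (Ico t₀ (t₀ + T))) (nhds 0)) := by
  obtain rfl : μ = prescribedTimeGain (t₀ + T) :=
    funext fun t ↦ by rw [hμ, prescribedTimeGain, add_comm, one_div]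
  have hT₀ : 1 / T = prescribedTimeGain (t₀ + T) t₀ := by simp [prescribedTimeGain]
  simp only [hT₀] at htαnonneg hσspos hσsderiv hσs'
  have hmem := prescribedTimeGain.mapsTo_Ico t₀ (t₀ + T)
  have hW₀ : 0 ≤ σs (prescribedTimeGain (t₀ + T) t₀) * V t₀ :=
    mul_nonneg (hσspos _ le_rfl).le (hVnonneg t₀ (left_mem_Ico.2 (lt_add_of_pos_right t₀ hT)))
  have hbound : ∀ t ∈ Ico t₀ (t₀ + T), V t ≤ (σs (prescribedTimeGain (t₀ + T) t₀) * V t₀ + M) /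
      σs (prescribedTimeGain (t₀ + T) t) := fun t ht ↦ by
    rw [le_div_iff₀' (hσspos _ (hmem ht))]
    exact (mul_le_max_of_prescribedTimeGain htαnonneg (fun s hs ↦ (hσspos s hs).le) hσsderiv hσs'
      hVnonneg hVderiv hVineq hdom t ht).trans (max_le_add_of_nonneg hW₀ hM)
  refine ⟨hbound, fun hσs ↦ ?_⟩
  have hgain := (prescribedTimeGain.tendsto_atTop (t₀ + T)).mono_left
    (nhdsWithin_mono _ (Ico_subset_Iio_self (a := t₀)))
  exact squeeze_zero' (eventually_mem_nhdsWithin.mono hVnonneg)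
    (eventually_mem_nhdsWithin.mono hbound) ((hσs.comp hgain).const_div_atTop _)

/-- **Analytic core of Theorem 1** (changing Lyapunov function + comparison): if
`V' ≤ -α̃(μ)·V + g` with `σ_s'(s) ≤ s⁻²·σ_s(s)·α̃(s)/2` and
`σ_s(μ(t))·g(t) ≤ (M/2)·α̃(μ(t))`, then
`V(t) ≤ (σ_s(μ(t₀))·V(t₀) + M)/σ_s(μ(t))`; in particular, if `σ_s(s) → ∞` as
`s → ∞`, then `V(t) → 0` as `t → t₀ + T` within the prescribed-time interval. -/
theorem changed_lyapunov_boundedness_and_convergence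
    (T t₀ : ℝ) (hT : 0 < T)
    (μ : ℝ → ℝ) (hμ : ∀ t, μ t = 1 / (T + t₀ - t))
    (tα : ℝ → ℝ)
    (htαcont : ContinuousOn tα (Ici (1 / T)))
    (htαnonneg : ∀ s, 1 / T ≤ s → 0 ≤ tα s)
    (σs σs' : ℝ → ℝ)
    (hσspos : ∀ s, 1 / T ≤ s → 0 < σs s)
    (hσsderiv : ∀ s, 1 / T ≤ s → HasDerivAt σs (σs' s) s)
    (hσs' : ∀ s, 1 / T ≤ s → σs' s ≤ s⁻¹ ^ 2 * σs s * tα s / 2)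
    (M : ℝ) (hM : 0 ≤ M)
    (V V' g : ℝ → ℝ)
    (hVnonneg : ∀ t ∈ Ico t₀ (t₀ + T), 0 ≤ V t)
    (hVderiv : ∀ t ∈ Ico t₀ (t₀ + T), HasDerivAt V (V' t) t)
    (hgcont : ContinuousOn g (Ico t₀ (t₀ + T)))
    (hgnonneg : ∀ t ∈ Ico t₀ (t₀ + T), 0 ≤ g t)
    (hVineq : ∀ t ∈ Ico t₀ (t₀ + T), V' t ≤ -tα (μ t) * V t + g t)
    (hdom : ∀ t ∈ Ico t₀ (t₀ + T), σs (μ t) * g t ≤ M / 2 * tα (μ t)) :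
    (∀ t ∈ Ico t₀ (t₀ + T), V t ≤ (σs (μ t₀) * V t₀ + M) / σs (μ t)) ∧
    (Tendsto σs atTop atTop →
      Tendsto V (nhdsWithin (t₀ + T) (Ico t₀ (t₀ + T))) (nhds 0)) :=
  changed_lyapunov_boundedness_and_convergence_general T t₀ hT μ hμ tα htαnonneg σs σs' hσspos
    (fun s hs ↦ (hσsderiv s hs).hasDerivWithinAt) hσs' M hM V V' g hVnonneg
    (fun t ht ↦ (hVderiv t ht).hasDerivWithinAt) hVineq hdom
end
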